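/- Let n ≥ 3 and let A be an n×n real symmetric diagonally dominant matrix all of whose entries satisfy A_{ij} ≥ ℓ > 0, whose off-diagonal entries satisfy A_{ij} ≤ m for i ≠ j, and whose diagonal dominances satisfy Δ_i(A) ≤ δ for all i. Then A is invertible and its ∞-norm condition number satisfies κ∞(A) = ‖A‖∞·‖A⁻¹‖∞ ≤ (2m(n−1)+δ)(3n−4)/(2ℓ(n−2)(n−1)). -/

import Mathlib

/-!
Write `N = n - 2` and `S = N • 1 + 𝟙𝟙ᵀ`. The row sums of `A` are at most `2m(n-1) + δ` because each
is twice the off-diagonal sum plus the dominance. The substance is the bound on `A⁻¹`, which follows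
from the `ℓ¹` estimate (`l1_bound`)
`2ℓ(n-1)(n-2) ‖z‖₁ ≤ (3n-4) ‖A z‖₁` for every `z`: it gives injectivity of `A`, and applied to the
columns of `A⁻¹` it bounds the column sums, which are the row sums by symmetry.

To prove it, note that `B = A - ℓ S` is symmetric, diagonally dominant and nonnegative off the
diagonal, so that `yᵀ B z = ∑ Δᵢ yᵢ zᵢ + ½ ∑_{i ≠ j} Bᵢⱼ (yᵢ + yⱼ)(zᵢ + zⱼ) ≥ 0` whenever
`(yᵢ + yⱼ)(zᵢ + zⱼ) ≥ 0` for all `i, j`. This holds when `yᵢ` is the sign of `zᵢ` on a superlevel set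
`T = {|zᵢ| ≥ t}` and zero elsewhere. With `s = ∑ zᵢ` and `Φ(T) = ∑_{i ∈ T} (N |zᵢ| + sgn(zᵢ) s)`
this says `ℓ Φ(T) ≤ ‖A z‖₁` (`threshold_bound`).

By `z ↦ -z` one may assume `s ≥ 0`. Let `p` be the number of `i` with `zᵢ ≥ 0`. Taking `T` to be
everything, `Φ = N ‖z‖₁ + s (2p - n)`, which is enough if `s (2p - n) ≥ 0`. Otherwise `p ≤ n - 2`,
and some `zᵢ ≥ s / N`. For `T = {N |zᵢ| ≥ s}` the indices with `zᵢ ≥ 0` lost from `T` number at most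
`p - 1` and contribute at most `2s` each, and the negative ones kept contribute nonnegatively, so
`Φ(T) ≥ N ∑_{zᵢ ≥ 0} zᵢ - (p - 2) s`. Then `2N Φ(T) + n Φ(univ) ≥ 2(n-1)N ‖z‖₁`,
and `2N + n = 3n - 4`.
-/

open Matrix

/-- The maximum absolute row sum norm of a matrix. -/
noncomputable def infNorm {n : ℕ} (A : Matrix (Fin n) (Fin n) ℝ) : ℝ :=
  ⨆ i, ∑ j, |A i j|

/-- A symmetric diagonally dominant matrix with nonnegative off-diagonal entries is a nonnegative
combination of the forms `yᵢ zᵢ` and `(yᵢ + yⱼ)(zᵢ + zⱼ)`. -/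
lemma bilin_nonneg {n : ℕ} (B : Fin n → Fin n → ℝ) (hB : ∀ i j, B i j = B j i)
    (hoff : ∀ i j, i ≠ j → 0 ≤ B i j)
    (hdd : ∀ i, ∑ j ∈ Finset.univ.erase i, B i j ≤ B i i) (y z : Fin n → ℝ)
    (h : ∀ i j, 0 ≤ (y i + y j) * (z i + z j)) :
    0 ≤ ∑ i, y i * ∑ j, B i j * z j := by
  set C : Fin n → Fin n → ℝ := fun i j => if i = j then 0 else B i j with hC
  have hCs : ∀ i j, C i j = C j i := by
    intro i j
    simp only [hC, hB i j, eq_comm]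
  have hC0 : ∀ i j, 0 ≤ C i j := by
    intro i j
    simp only [hC]
    split_ifs with hij
    · exact le_rfl
    · exact hoff i j hij
  have hsum : ∀ i, ∑ j, C i j = ∑ j ∈ Finset.univ.erase i, B i j := by
    intro i
    rw [← Finset.add_sum_erase _ _ (Finset.mem_univ i)]
    simp only [hC, if_true, zero_add]
    refine Finset.sum_congr rfl fun j hj => ?_
    rw [if_neg (Finset.ne_of_mem_erase hj).symm]
  have hrow : ∀ i, ∑ j, B i j * z j
      = (B i i - ∑ j, C i j) * z i + ∑ j, C i j * (z i + z j) := by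
    intro i
    have h1 : ∑ j, B i j * z j = B i i * z i + ∑ j, C i j * z j := by
      rw [← Finset.add_sum_erase _ _ (Finset.mem_univ i),
        ← Finset.add_sum_erase _ (fun j => C i j * z j) (Finset.mem_univ i)]
      simp only [hC, if_true, zero_mul, zero_add]
      congr 1
      refine Finset.sum_congr rfl fun j hj => ?_
      rw [if_neg (Finset.ne_of_mem_erase hj).symm]
    rw [h1]
    simp only [mul_add, Finset.sum_add_distrib, ← Finset.sum_mul]
    ring
  have hsplit : ∑ i, y i * ∑ j, B i j * z j
      = ∑ i, (B i i - ∑ j, C i j) * (y i * z i) + ∑ i, ∑ j, C i j * (y i * (z i + z j)) := by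
    rw [← Finset.sum_add_distrib]
    refine Finset.sum_congr rfl fun i _ => ?_
    rw [hrow, mul_add, Finset.mul_sum]
    congr 1
    · ring
    · exact Finset.sum_congr rfl fun j _ => by ring
  have hswap : ∑ i, ∑ j, C i j * (y i * (z i + z j)) = ∑ i, ∑ j, C i j * (y j * (z i + z j)) := by
    rw [Finset.sum_comm]
    refine Finset.sum_congr rfl fun i _ => Finset.sum_congr rfl fun j _ => ?_
    rw [hCs j i, add_comm (z j)]
  have hsym2 : 0 ≤ ∑ i, ∑ j, C i j * (y i * (z i + z j))
      + ∑ i, ∑ j, C i j * (y j * (z i + z j)) := by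
    simp only [← Finset.sum_add_distrib]
    refine Finset.sum_nonneg fun i _ => Finset.sum_nonneg fun j _ => ?_
    have := mul_nonneg (hC0 i j) (h i j)
    linarith
  have hdiag : 0 ≤ ∑ i, (B i i - ∑ j, C i j) * (y i * z i) := by
    refine Finset.sum_nonneg fun i _ => mul_nonneg ?_ ?_
    · rw [hsum]
      linarith [hdd i]
    · have := h i i
      linarith
  rw [hsplit]
  linarith

/-- The sign of `x`, truncated to zero where `|x| < t`; the sign of `0` is taken to be `1`. -/
noncomputable def truncSign (t x : ℝ) : ℝ :=
  if t ≤ |x| then (if 0 ≤ x then 1 else -1) else 0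

lemma truncSign_pair (t x w : ℝ) :
    0 ≤ (truncSign t x + truncSign t w) * (x + w) := by
  unfold truncSign
  rcases abs_cases x with ⟨hx, hx'⟩ | ⟨hx, hx'⟩ <;>
    rcases abs_cases w with ⟨hw, hw'⟩ | ⟨hw, hw'⟩ <;>
    rw [hx, hw] <;> split_ifs <;> linarith

lemma abs_truncSign_le (t x : ℝ) : |truncSign t x| ≤ 1 := by
  unfold truncSign
  split_ifs <;> simp

/-- Comparison of `A` with `ℓ S`, tested against the truncated sign of `z`. -/
lemma threshold_bound {n : ℕ} (ℓ : ℝ) (A : Matrix (Fin n) (Fin n) ℝ)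
    (hsym : A.IsSymm) (hdd : ∀ i, ∑ j ∈ Finset.univ.erase i, A i j ≤ A i i)
    (hent : ∀ i j, ℓ ≤ A i j) (z : Fin n → ℝ) (t : ℝ) :
    ℓ * ∑ i, truncSign t (z i) * (((n : ℝ) - 2) * z i + ∑ j, z j) ≤ ∑ i, |(A *ᵥ z) i| := by
  have key := bilin_nonneg (fun i j => A i j - ℓ * (1 + if i = j then (n : ℝ) - 2 else 0))
    (fun i j => by simp only [hsym.apply j i, eq_comm]) (fun i j hij => by
      simp only [if_neg hij]
      linarith [hent i j]) (fun i => by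
      have h1 : ∑ j ∈ Finset.univ.erase i, (A i j - ℓ * (1 + if i = j then (n : ℝ) - 2 else 0))
          = ∑ j ∈ Finset.univ.erase i, (A i j - ℓ) := by
        refine Finset.sum_congr rfl fun j hj => ?_
        rw [if_neg (Finset.ne_of_mem_erase hj).symm]
        ring
      have hn : 1 ≤ n := Nat.one_le_iff_ne_zero.2 (by rintro rfl; exact i.elim0)
      rw [h1, Finset.sum_sub_distrib, Finset.sum_const, Finset.card_erase_of_mem (Finset.mem_univ i),
        Finset.card_univ, Fintype.card_fin, nsmul_eq_mul, Nat.cast_sub hn]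
      simp only [if_true]
      push_cast
      linarith [hdd i])
    (fun i => truncSign t (z i)) z (fun i j => truncSign_pair t (z i) (z j))
  have hrow : ∀ i, ∑ j, (A i j - ℓ * (1 + if i = j then (n : ℝ) - 2 else 0)) * z j
      = (A *ᵥ z) i - ℓ * (((n : ℝ) - 2) * z i + ∑ j, z j) := by
    intro i
    simp only [sub_mul, mul_assoc, add_mul, ite_mul, zero_mul, one_mul, Finset.sum_sub_distrib,
      ← Finset.mul_sum, Finset.sum_add_distrib, Finset.sum_ite_eq, Finset.mem_univ, if_true,
      Matrix.mulVec, dotProduct]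
    ring
  simp only [hrow, mul_sub, Finset.sum_sub_distrib] at key
  have hle : ∑ i, truncSign t (z i) * (A *ᵥ z) i ≤ ∑ i, |(A *ᵥ z) i| := by
    refine Finset.sum_le_sum fun i _ => (le_abs_self _).trans ?_
    rw [abs_mul]
    exact mul_le_of_le_one_left (abs_nonneg _) (abs_truncSign_le t (z i))
  rw [Finset.mul_sum]
  have : ∀ i, ℓ * (truncSign t (z i) * (((n : ℝ) - 2) * z i + ∑ j, z j))
      = truncSign t (z i) * (ℓ * (((n : ℝ) - 2) * z i + ∑ j, z j)) := fun i => by ring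
  simp only [this]
  linarith

/-- The `ℓ¹` estimate for `A`, combining the superlevel sets at heights `0` and `s / (n - 2)`, where
`s` is the sum of the entries of `z`. -/
lemma l1_bound_of_sum_nonneg {n : ℕ} (hn : 3 ≤ n) (ℓ : ℝ) (hℓ : 0 < ℓ)
    (A : Matrix (Fin n) (Fin n) ℝ)
    (hsym : A.IsSymm) (hdd : ∀ i, ∑ j ∈ Finset.univ.erase i, A i j ≤ A i i)
    (hent : ∀ i j, ℓ ≤ A i j) (z : Fin n → ℝ) (hs : 0 ≤ ∑ j, z j) :
    2 * ℓ * ((n : ℝ) - 2) * ((n : ℝ) - 1) * ∑ i, |z i|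
      ≤ (3 * (n : ℝ) - 4) * ∑ i, |(A *ᵥ z) i| := by
  have hn' : (3 : ℝ) ≤ n := by exact_mod_cast hn
  have hall := threshold_bound ℓ A hsym hdd hent z 0
  have hT := threshold_bound ℓ A hsym hdd hent z ((∑ j, z j) / ((n : ℝ) - 2))
  set β := ∑ i, |(A *ᵥ z) i| with hβ
  have hβ0 : 0 ≤ β := Finset.sum_nonneg fun i _ => abs_nonneg _
  set s := ∑ j, z j with hsdef
  set E := Finset.univ.filter (fun i => 0 ≤ z i) with hE
  set W := ∑ i ∈ E, z i with hW
  have hV : ∑ i, |z i| = 2 * W - s := by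
    rw [hW, hE, Finset.sum_filter, hsdef, Finset.mul_sum, ← Finset.sum_sub_distrib]
    refine Finset.sum_congr rfl fun i _ => ?_
    split_ifs with h
    · rw [abs_of_nonneg h]; ring
    · rw [abs_of_neg (not_le.1 h)]; ring
  have hWs : s ≤ W := by
    have h1 : s ≤ ∑ i, |z i| := Finset.sum_le_sum fun i _ => le_abs_self _
    linarith
  have hfull : ∑ i, truncSign 0 (z i) * (((n : ℝ) - 2) * z i + s)
      = ((n : ℝ) - 2) * (2 * W - s) + s * (2 * (E.card : ℝ) - n) := by
    have hd : ∑ i, truncSign 0 (z i) = 2 * (E.card : ℝ) - n := by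
      have : ∀ i, truncSign 0 (z i) = 2 * (if 0 ≤ z i then (1 : ℝ) else 0) - 1 := by
        intro i
        simp only [truncSign, abs_nonneg, if_true]
        split_ifs <;> norm_num
      simp only [this, Finset.sum_sub_distrib, ← Finset.mul_sum, Finset.sum_boole, hE]
      simp
    rw [← hV, ← hd, Finset.mul_sum, Finset.mul_sum, ← Finset.sum_add_distrib]
    refine Finset.sum_congr rfl fun i _ => ?_
    have : truncSign 0 (z i) * z i = |z i| := by
      simp only [truncSign, abs_nonneg, if_true]
      split_ifs with h
      · rw [abs_of_nonneg h]; ring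
      · rw [abs_of_neg (not_le.1 h)]; ring
    rw [← this]
    ring
  rw [hfull] at hall
  rw [hV]
  by_cases hgood : 0 ≤ s * (2 * (E.card : ℝ) - n)
  · -- `ℓ (n-2) ‖z‖₁ ≤ β`, and `2(n-1) ≤ 3n-4`.
    have h1 : ℓ * (((n : ℝ) - 2) * (2 * W - s)) ≤ β := by
      nlinarith [mul_nonneg hℓ.le hgood]
    nlinarith [mul_le_mul_of_nonneg_left h1 (by linarith : (0 : ℝ) ≤ 2 * ((n : ℝ) - 1)),
      mul_nonneg hβ0 (by linarith : (0 : ℝ) ≤ (n : ℝ) - 2)]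
  · have hspos : 0 < s := by
      rcases hs.lt_or_eq with h | h
      · exact h
      · exact absurd (by rw [← h, zero_mul]) hgood
    have hcard : 2 * E.card < n := by
      by_contra! hc
      have : (n : ℝ) ≤ 2 * E.card := by exact_mod_cast hc
      exact hgood (mul_nonneg hs (by linarith))
    have hcard2 : (E.card : ℝ) ≤ (n : ℝ) - 2 := by
      have : E.card + 2 ≤ n := by omega
      have : (E.card : ℝ) + 2 ≤ n := by exact_mod_cast this
      linarith
    have hNpos : 0 < (n : ℝ) - 2 := by linarith
    have hEne : E.Nonempty := by
      rw [Finset.nonempty_iff_ne_empty]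
      intro h
      rw [h, Finset.sum_empty] at hW
      linarith
    have hp1 : (1 : ℝ) ≤ E.card := by exact_mod_cast hEne.card_pos
    -- The average of `z` over `E` is at least `s / p ≥ s / (n - 2)`.
    obtain ⟨k, hkE, hk⟩ : ∃ k ∈ E, s / ((n : ℝ) - 2) ≤ z k := by
      refine Finset.exists_le_of_sum_le hEne ?_
      rw [Finset.sum_const, nsmul_eq_mul, ← hW]
      refine le_trans ?_ hWs
      rw [mul_div_assoc', div_le_iff₀ hNpos, mul_comm s]
      exact mul_le_mul_of_nonneg_right hcard2 hs
    have hk0 : 0 ≤ z k := (Finset.mem_filter.1 hkE).2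
    have hPhi : ((n : ℝ) - 2) * W - E.card * s + 2 * s
        ≤ ∑ i, truncSign (s / ((n : ℝ) - 2)) (z i) * (((n : ℝ) - 2) * z i + s) := by
      have hl : ((n : ℝ) - 2) * W - E.card * s + 2 * s
          = ∑ i, ((if 0 ≤ z i then ((n : ℝ) - 2) * z i - s else 0)
            + if i = k then 2 * s else 0) := by
        rw [Finset.sum_add_distrib, ← Finset.sum_filter, Finset.sum_sub_distrib, ← Finset.mul_sum,
          Finset.sum_const, nsmul_eq_mul]
        simp [hW, hE]
      rw [hl]
      refine Finset.sum_le_sum fun i _ => ?_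
      unfold truncSign
      by_cases hik : i = k
      · subst hik
        rw [abs_of_nonneg hk0, if_pos hk, if_pos hk0, if_pos rfl, if_pos hk0]
        linarith
      · simp only [if_neg hik, div_le_iff₀ hNpos]
        by_cases hi : 0 ≤ z i
        · rw [abs_of_nonneg hi, if_pos hi, if_pos hi]
          split_ifs with h <;> nlinarith
        · rw [abs_of_neg (not_le.1 hi), if_neg hi, if_neg hi]
          split_ifs with h <;> nlinarith
    have hT' := (mul_le_mul_of_nonneg_left hPhi hℓ.le).trans hT
    have hcomb : 2 * ((n : ℝ) - 2) * ((n : ℝ) - 1) * (2 * W - s)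
        ≤ 2 * ((n : ℝ) - 2) * (((n : ℝ) - 2) * W - E.card * s + 2 * s)
          + n * (((n : ℝ) - 2) * (2 * W - s) + s * (2 * (E.card : ℝ) - n)) := by
      have := mul_nonneg hs (by linarith : (0 : ℝ) ≤ (E.card : ℝ) - 1)
      linarith
    have h1 := mul_le_mul_of_nonneg_left hcomb hℓ.le
    have h2 := mul_le_mul_of_nonneg_left hT' (by linarith : (0 : ℝ) ≤ 2 * ((n : ℝ) - 2))
    have h3 := mul_le_mul_of_nonneg_left hall (by linarith : (0 : ℝ) ≤ (n : ℝ))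
    linarith

lemma l1_bound {n : ℕ} (hn : 3 ≤ n) (ℓ : ℝ) (hℓ : 0 < ℓ) (A : Matrix (Fin n) (Fin n) ℝ)
    (hsym : A.IsSymm) (hdd : ∀ i, ∑ j ∈ Finset.univ.erase i, A i j ≤ A i i)
    (hent : ∀ i j, ℓ ≤ A i j) (z : Fin n → ℝ) :
    2 * ℓ * ((n : ℝ) - 2) * ((n : ℝ) - 1) * ∑ i, |z i|
      ≤ (3 * (n : ℝ) - 4) * ∑ i, |(A *ᵥ z) i| := by
  rcases le_total 0 (∑ j, z j) with hs | hs
  · exact l1_bound_of_sum_nonneg hn ℓ hℓ A hsym hdd hent z hs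
  · have h := l1_bound_of_sum_nonneg hn ℓ hℓ A hsym hdd hent (-z) (by simpa using hs)
    simpa [Matrix.mulVec_neg] using h

theorem condition_number_bound
    (n : ℕ) (hn : 3 ≤ n) (ℓ m δ : ℝ) (hℓ : 0 < ℓ)
    (A : Matrix (Fin n) (Fin n) ℝ) (hsym : A.IsSymm)
    (hdd : ∀ i, ∑ j ∈ Finset.univ.erase i, |A i j| ≤ |A i i|)
    (hent : ∀ i j, ℓ ≤ A i j)
    (hup : ∀ i j, i ≠ j → A i j ≤ m)
    (hδ : ∀ i, |A i i| - ∑ j ∈ Finset.univ.erase i, |A i j| ≤ δ) :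
    IsUnit A ∧
    infNorm A * infNorm A⁻¹ ≤
      (2 * m * ((n : ℝ) - 1) + δ) * (3 * (n : ℝ) - 4) /
        (2 * ℓ * ((n : ℝ) - 2) * ((n : ℝ) - 1)) := by
  have hn' : (3 : ℝ) ≤ n := by exact_mod_cast hn
  have : Nonempty (Fin n) := ⟨⟨0, by omega⟩⟩
  have habs : ∀ i j, |A i j| = A i j := fun i j => abs_of_nonneg (hℓ.le.trans (hent i j))
  have hdd' : ∀ i, ∑ j ∈ Finset.univ.erase i, A i j ≤ A i i := by
    simpa only [habs] using hdd
  have hbound := l1_bound hn ℓ hℓ A hsym hdd' hent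
  have hc : 0 < 2 * ℓ * ((n : ℝ) - 2) * ((n : ℝ) - 1) :=
    mul_pos (mul_pos (by linarith) (by linarith)) (by linarith)
  have hunit : IsUnit A := by
    rw [← Matrix.mulVec_injective_iff_isUnit]
    intro x w hxw
    have h0 : A *ᵥ (x - w) = 0 := by
      rw [Matrix.mulVec_sub, sub_eq_zero]
      exact hxw
    have h1 := hbound (x - w)
    simp only [h0, Pi.zero_apply, abs_zero, Finset.sum_const_zero, mul_zero] at h1
    have h2 : ∑ i, |(x - w) i| ≤ 0 := nonpos_of_mul_nonpos_right h1 hc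
    ext i
    have h3 := (Finset.single_le_sum (f := fun i => |(x - w) i|)
      (fun i _ => abs_nonneg _) (Finset.mem_univ i)).trans h2
    have h4 := abs_nonpos_iff.1 h3
    exact sub_eq_zero.1 h4
  refine ⟨hunit, ?_⟩
  have hdet : IsUnit A.det := (Matrix.isUnit_iff_isUnit_det A).1 hunit
  have hA : infNorm A ≤ 2 * m * ((n : ℝ) - 1) + δ := by
    refine ciSup_le fun i => ?_
    have h1 : ∑ j ∈ Finset.univ.erase i, |A i j| ≤ ((n : ℝ) - 1) * m := by
      have h2 : ∑ j ∈ Finset.univ.erase i, |A i j| ≤ ∑ j ∈ Finset.univ.erase i, m := by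
        refine Finset.sum_le_sum fun j hj => ?_
        rw [habs]
        exact hup i j (Finset.ne_of_mem_erase hj).symm
      rwa [Finset.sum_const, Finset.card_erase_of_mem (Finset.mem_univ i), Finset.card_univ,
        Fintype.card_fin, nsmul_eq_mul, Nat.cast_sub (by omega), Nat.cast_one] at h2
    rw [← Finset.add_sum_erase _ _ (Finset.mem_univ i)]
    linarith [hδ i]
  have hinv : infNorm A⁻¹ ≤ (3 * (n : ℝ) - 4) / (2 * ℓ * ((n : ℝ) - 2) * ((n : ℝ) - 1)) := by
    refine ciSup_le fun i => ?_
    rw [le_div_iff₀ hc, mul_comm]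
    have h1 := hbound (fun j => A⁻¹ j i)
    have h2 : A *ᵥ (fun j => A⁻¹ j i) = fun k => (1 : Matrix (Fin n) (Fin n) ℝ) k i := by
      rw [← Matrix.mul_nonsing_inv A hdet]
      rfl
    have h3 : ∑ k, |(1 : Matrix (Fin n) (Fin n) ℝ) k i| = 1 := by
      simp [Matrix.one_apply, apply_ite abs]
    have h4 : ∀ j, A⁻¹ j i = A⁻¹ i j := fun j => by
      have : (A⁻¹).IsSymm := by
        rw [Matrix.IsSymm, Matrix.transpose_nonsing_inv, hsym.eq]
      exact this.apply i j
    rw [h2] at h1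
    simp only [h3, mul_one, h4] at h1
    exact h1
  have hinv0 : 0 ≤ infNorm A⁻¹ :=
    Real.iSup_nonneg fun i => Finset.sum_nonneg fun j _ => abs_nonneg _
  have hA0 : 0 ≤ infNorm A :=
    Real.iSup_nonneg fun i => Finset.sum_nonneg fun j _ => abs_nonneg _
  rw [mul_div_assoc]
  exact mul_le_mul hA hinv hinv0 (hA0.trans hA)
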